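/- With γ = μ²/σ² and μ ≥ 0, the product of the first and negative-first moments of the azimuthally symmetric two-dimensional distribution with radial profile h satisfies M_{+1} M_{−1} = (∫₀^∞ r² h(r) dr) · (∫₀^∞ h(r) dr) / (∫₀^∞ r h(r) dr)² = (π/2) · (1 + γ) / [ e^{−γ/2} + √(πγ/2) · Erf(√(γ/2)) ]². -/

import Mathlib

/-- The fitted radial density
`h(r) = (2/√(2πσ²)) · exp(−(μ² + r²)/(2σ²)) · cosh(μ r / σ²)`. -/
noncomputable def hdens (μ σ : ℝ) (r : ℝ) : ℝ :=
  (2 / Real.sqrt (2 * Real.pi * σ ^ 2)) * Real.exp (-(μ ^ 2 + r ^ 2) / (2 * σ ^ 2)) *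
    Real.cosh (μ * r / σ ^ 2)

/-- The error function `Erf(x) = (2/√π) ∫₀^x e^{−t²} dt`. -/
noncomputable def erf (x : ℝ) : ℝ :=
  (2 / Real.sqrt Real.pi) * ∫ t in (0 : ℝ)..x, Real.exp (-t ^ 2)

open MeasureTheory ProbabilityTheory in
lemma int_split (f : ℝ → ℝ) (hf : Integrable f) :
    ∫ r in Set.Ioi (0:ℝ), (f r + f (-r)) = ∫ r, f r := by
  rw [integral_add hf.integrableOn hf.comp_neg.integrableOn, integral_comp_neg_Ioi, neg_zero,
    add_comm]
  exact intervalIntegral.integral_Iic_add_Ioi hf.integrableOn hf.integrableOn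

open MeasureTheory ProbabilityTheory in
lemma hdens_eq (μ σ : ℝ) (hσ : 0 < σ) (v : NNReal) (hv : (v:ℝ) = σ ^ 2) (r : ℝ) :
    hdens μ σ r = gaussianPDFReal μ v r + gaussianPDFReal μ v (-r) := by
  unfold hdens gaussianPDFReal
  rw [hv, Real.cosh_eq]
  have h1 : -(r - μ) ^ 2 / (2 * σ ^ 2) = -(μ ^ 2 + r ^ 2) / (2 * σ ^ 2) + μ * r / σ ^ 2 := by
    field_simp; ring
  have h2 : -(-r - μ) ^ 2 / (2 * σ ^ 2) = -(μ ^ 2 + r ^ 2) / (2 * σ ^ 2) + -(μ * r / σ ^ 2) := by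
    field_simp; ring
  rw [h1, h2, Real.exp_add, Real.exp_add]
  ring

open MeasureTheory ProbabilityTheory in
lemma int_sq (μ : ℝ) (v : NNReal) (hv : v ≠ 0) :
    ∫ x, x ^ 2 * gaussianPDFReal μ v x = v + μ ^ 2 := by
  have h := variance_eq_sub (μ := gaussianReal μ v) (memLp_id_gaussianReal (μ := μ) (v := v) 2)
  rw [variance_id_gaussianReal] at h
  simp only [Pi.pow_apply, id] at h
  rw [integral_id_gaussianReal, integral_gaussianReal_eq_integral_smul hv] at h
  simp only [smul_eq_mul] at h
  simp_rw [mul_comm (_ ^ 2) (gaussianPDFReal _ _ _)]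
  linarith

open MeasureTheory ProbabilityTheory in
lemma integrable_sq (μ : ℝ) (v : NNReal) (hv : v ≠ 0) :
    Integrable (fun x => x ^ 2 * gaussianPDFReal μ v x) := by
  apply Integrable.of_integral_ne_zero
  rw [int_sq μ v hv]
  have : 0 < (v:ℝ) := by positivity
  positivity

open MeasureTheory ProbabilityTheory in
lemma integrable_one (μ : ℝ) (v : NNReal) (hv : v ≠ 0) :
    Integrable (fun x => x * gaussianPDFReal μ v x) := by
  refine Integrable.mono' ((integrable_sq μ v hv).add (integrable_gaussianPDFReal μ v)) ?_ ?_
  · exact (measurable_id.mul (measurable_gaussianPDFReal μ v)).aestronglyMeasurable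
  · refine Filter.Eventually.of_forall fun x => ?_
    have := gaussianPDFReal_nonneg μ v x
    rw [Real.norm_eq_abs, abs_mul, abs_of_nonneg this]
    simp only [Pi.add_apply]
    have : |x| ≤ x ^ 2 + 1 := by
      rw [← sq_abs]; nlinarith [sq_nonneg (|x| - 1), abs_nonneg x]
    nlinarith

open MeasureTheory ProbabilityTheory in
lemma pdf_deriv (μ : ℝ) (v : NNReal) (hv : v ≠ 0) (x : ℝ) :
    HasDerivAt (gaussianPDFReal μ v) (-(x - μ) / v * gaussianPDFReal μ v x) x := by
  have h : HasDerivAt (fun x : ℝ => -(x - μ) ^ 2 / (2 * v)) (-(x - μ) / v) x := by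
    refine ((((hasDerivAt_id x).sub_const μ).pow 2).neg.div_const (2 * (v:ℝ))).congr_deriv ?_
    have : (v:ℝ) ≠ 0 := by positivity
    simp
    field_simp
    ring
  unfold gaussianPDFReal
  refine ((h.exp).const_mul ((√(2 * Real.pi * v))⁻¹)).congr_deriv ?_
  ring

open MeasureTheory ProbabilityTheory Filter Topology in
lemma pdf_tendsto (μ : ℝ) (v : NNReal) (hv : v ≠ 0) :
    Tendsto (fun r => gaussianPDFReal μ v r + gaussianPDFReal μ v (-r)) atTop (𝓝 0) := by
  have key : ∀ c : ℝ, Tendsto (fun r => gaussianPDFReal c v r) atTop (𝓝 0) := by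
    intro c
    unfold gaussianPDFReal
    have hv' : 0 < (v:ℝ) := by positivity
    have : Tendsto (fun r : ℝ => (r - c) ^ 2 / (2 * v)) atTop atTop := by
      apply Tendsto.atTop_div_const (by positivity)
      exact (tendsto_pow_atTop two_ne_zero).comp (tendsto_atTop_add_const_right _ (-c) tendsto_id)
    have := (Real.tendsto_exp_neg_atTop_nhds_zero.comp this).const_mul ((√(2 * Real.pi * v))⁻¹)
    simpa [Function.comp_def, neg_div] using this
  have h2 : ∀ r, gaussianPDFReal μ v (-r) = gaussianPDFReal (-μ) v r := by
    intro r; unfold gaussianPDFReal; congr 3; ring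
  simp_rw [h2]
  simpa using (key μ).add (key (-μ))

open MeasureTheory ProbabilityTheory in
lemma shift_Ioi (f : ℝ → ℝ) (c : ℝ) :
    ∫ r in Set.Ioi (0:ℝ), f (r + c) = ∫ r in Set.Ioi c, f r := by
  have := (measurePreserving_add_right volume c).setIntegral_preimage_emb
    (measurableEmbedding_addRight c) f (Set.Ioi c)
  simpa using this

open MeasureTheory ProbabilityTheory in
lemma int_diff (μ σ : ℝ) (hσ : 0 < σ) (v : NNReal) (hv : (v:ℝ) = σ ^ 2) :
    ∫ r in Set.Ioi (0:ℝ), (gaussianPDFReal μ v r - gaussianPDFReal μ v (-r))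
      = erf (μ / (√2 * σ)) := by
  have hi := integrable_gaussianPDFReal μ v
  have hi0 := integrable_gaussianPDFReal 0 v
  have h2 : ∀ r, gaussianPDFReal μ v (-r) = gaussianPDFReal 0 v (r + μ) := by
    intro r; unfold gaussianPDFReal; congr 3; ring
  have h1 : ∀ r, gaussianPDFReal μ v r = gaussianPDFReal 0 v (r + -μ) := by
    intro r; unfold gaussianPDFReal; congr 3; ring
  rw [integral_sub hi.integrableOn hi.comp_neg.integrableOn]
  simp_rw [h2]
  simp_rw [h1]
  rw [shift_Ioi, shift_Ioi, intervalIntegral.integral_Ioi_sub_Ioi' hi0.integrableOn hi0.integrableOn]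
  have hneg : ∫ x in (-μ)..0, gaussianPDFReal 0 v x = ∫ x in (0:ℝ)..μ, gaussianPDFReal 0 v x := by
    have := intervalIntegral.integral_comp_neg (a := 0) (b := μ) (gaussianPDFReal 0 v)
    rw [neg_zero] at this
    rw [← this]
    refine intervalIntegral.integral_congr fun x _ => ?_
    simp [gaussianPDFReal]
  rw [← intervalIntegral.integral_add_adjacent_intervals (b := 0) hi0.intervalIntegrable
    hi0.intervalIntegrable, hneg, ← two_mul]
  have hc : √2 * σ ≠ 0 := by positivity
  have hs := intervalIntegral.integral_comp_div (a := 0) (b := μ)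
    (fun t => Real.exp (-t ^ 2)) hc
  rw [zero_div, smul_eq_mul] at hs
  have hp : ∀ x, gaussianPDFReal 0 v x
      = (√2 * √Real.pi * σ)⁻¹ * Real.exp (-(x / (√2 * σ)) ^ 2) := by
    intro x
    unfold gaussianPDFReal
    rw [hv, Real.sqrt_mul (by positivity), Real.sqrt_mul (by norm_num), Real.sqrt_sq hσ.le,
      div_pow, mul_pow, Real.sq_sqrt (by norm_num), sub_zero, neg_div]
  simp_rw [hp]
  rw [intervalIntegral.integral_const_mul, hs]
  unfold erf
  have := Real.pi_pos
  field_simp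

open MeasureTheory ProbabilityTheory in
lemma int_one (μ σ : ℝ) (hσ : 0 < σ) (v : NNReal) (hv : (v:ℝ) = σ ^ 2) :
    ∫ r in Set.Ioi (0:ℝ), r * (gaussianPDFReal μ v r + gaussianPDFReal μ v (-r))
      = 2 * v * gaussianPDFReal μ v 0 + μ * erf (μ / (√2 * σ)) := by
  have hv0 : v ≠ 0 := by
    intro h; rw [h] at hv; simp at hv; exact absurd hv.symm (by positivity)
  have hv1 : (v:ℝ) ≠ 0 := by positivity
  have hi := integrable_gaussianPDFReal μ v
  have hd : Integrable (fun r => gaussianPDFReal μ v r - gaussianPDFReal μ v (-r)) :=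
    hi.sub hi.comp_neg
  have hr : Integrable (fun r => r * (gaussianPDFReal μ v r + gaussianPDFReal μ v (-r))) := by
    have h := integrable_one μ v hv0
    refine (h.sub h.comp_neg).congr (Filter.Eventually.of_forall fun x => ?_)
    simp only [Pi.sub_apply]; ring
  have ftc := integral_Ioi_of_hasDerivAt_of_tendsto' (a := (0:ℝ))
    (f := fun r => -v * (gaussianPDFReal μ v r + gaussianPDFReal μ v (-r)))
    (f' := fun r => r * (gaussianPDFReal μ v r + gaussianPDFReal μ v (-r))
      - μ * (gaussianPDFReal μ v r - gaussianPDFReal μ v (-r))) (m := -v * 0)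
    (fun x _ => by
      have a := pdf_deriv μ v hv0 x
      have b := (pdf_deriv μ v hv0 (-x)).comp x (hasDerivAt_neg x)
      refine ((a.add b).const_mul (-(v:ℝ))).congr_deriv ?_
      field_simp
      ring)
    (hr.sub (hd.const_mul μ)).integrableOn
    ((pdf_tendsto μ v hv0).const_mul _)
  rw [integral_sub hr.integrableOn (hd.const_mul μ).integrableOn, integral_const_mul,
    int_diff μ σ hσ v hv] at ftc
  simp only [neg_zero] at ftc
  linarith

/-- With `γ = μ²/σ²` and `μ ≥ 0`, the product of the first and negative-first
moments of the azimuthally symmetric 2D distribution with radial profile `h`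
satisfies
`M₊₁ M₋₁ = (∫₀^∞ r² h)(∫₀^∞ h)/(∫₀^∞ r h)² = (π/2)(1+γ)/[e^{−γ/2} + √(πγ/2) Erf(√(γ/2))]²`. -/
theorem stmt15 (μ σ γ : ℝ) (hμ : 0 ≤ μ) (hσ : 0 < σ) (hγ : γ = μ ^ 2 / σ ^ 2) :
    (∫ r in Set.Ioi (0 : ℝ), r ^ 2 * hdens μ σ r) * (∫ r in Set.Ioi (0 : ℝ), hdens μ σ r) /
        (∫ r in Set.Ioi (0 : ℝ), r * hdens μ σ r) ^ 2 =
      (Real.pi / 2) * (1 + γ) /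
        (Real.exp (-γ / 2) + Real.sqrt (Real.pi * γ / 2) * erf (Real.sqrt (γ / 2))) ^ 2 := by
  obtain ⟨v, hv⟩ : ∃ v : NNReal, (v:ℝ) = σ ^ 2 := ⟨⟨σ ^ 2, by positivity⟩, rfl⟩
  have hv0 : v ≠ 0 := by
    intro h; rw [h] at hv; simp at hv; exact absurd hv.symm (by positivity)
  simp_rw [hdens_eq μ σ hσ v hv]
  rw [int_split _ (ProbabilityTheory.integrable_gaussianPDFReal μ v), ProbabilityTheory.integral_gaussianPDFReal_eq_one μ hv0,
    int_one μ σ hσ v hv]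
  have hsq := int_split _ (integrable_sq μ v hv0)
  simp only [neg_sq, ← mul_add] at hsq
  rw [hsq, int_sq μ v hv0]
  have hp := Real.pi_pos
  have e1 : √(γ / 2) = μ / (√2 * σ) := by
    rw [hγ, Real.sqrt_eq_iff_mul_self_eq (by positivity) (by positivity)]
    field_simp
    rw [Real.sq_sqrt (by norm_num)]
  have e2 : √(Real.pi * γ / 2) = √Real.pi * μ / (√2 * σ) := by
    rw [mul_div_assoc, Real.sqrt_mul hp.le, e1]; ring
  have e3 : ProbabilityTheory.gaussianPDFReal μ v 0 = (√2 * √Real.pi * σ)⁻¹ * Real.exp (-γ / 2) := by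
    unfold ProbabilityTheory.gaussianPDFReal
    rw [hv, Real.sqrt_mul (by positivity), Real.sqrt_mul (by norm_num), Real.sqrt_sq hσ.le, hγ]
    congr 2
    field_simp; ring
  rw [e1, e2, e3, hv]
  have key : 2 * σ ^ 2 * ((√2 * √Real.pi * σ)⁻¹ * Real.exp (-γ / 2)) + μ * erf (μ / (√2 * σ))
    = (√2 * σ / √Real.pi) * (Real.exp (-γ / 2) + √Real.pi * μ / (√2 * σ) * erf (μ / (√2 * σ))) := by
    have h2 : √2 ^ 2 = (2:ℝ) := Real.sq_sqrt (by norm_num)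
    field_simp
    linear_combination (-σ * Real.exp (-(γ / 2))) * h2
  rw [key, mul_pow, div_pow, mul_pow, Real.sq_sqrt (by norm_num), Real.sq_sqrt hp.le, hγ]
  rw [← div_div]
  congr 1
  field_simp
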